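/- Let z₁,…,z_n ∈ ℂ with Im z_k > 0 for all k, and T(z) := ∏_{k=1}^n (z − z_k)/(z − conj(z_k)). Then T(z) → 1 as |z| → ∞, and more precisely z·(T(z) − 1) → −2i·∑_{k=1}^n Im(z_k) as |z| → ∞. -/

import Mathlib

open Complex Filter Bornology

lemma bl_factor (a b : ℂ) :
    Tendsto (fun w : ℂ => (w - a) / (w - b)) (cobounded ℂ) (nhds 1) ∧
    Tendsto (fun w : ℂ => w * ((w - a) / (w - b) - 1)) (cobounded ℂ) (nhds (b - a)) := by
  have hi : Tendsto (fun w : ℂ => w⁻¹) (cobounded ℂ) (nhds 0) := tendsto_inv₀_cobounded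
  have h0 : ∀ c : ℂ, ∀ᶠ w in cobounded ℂ, w ≠ c := fun c => eventually_ne_cobounded c
  have hc : ∀ c : ℂ, Tendsto (fun w : ℂ => 1 - c * w⁻¹) (cobounded ℂ) (nhds 1) := fun c => by
    simpa using (hi.const_mul c).const_sub 1
  constructor
  · have h := (hc a).div (hc b) one_ne_zero
    rw [div_one] at h
    refine h.congr' ?_
    filter_upwards [h0 0, h0 b] with w hw hb
    have hb' := sub_ne_zero.mpr hb
    have e : ∀ c : ℂ, 1 - c * w⁻¹ = (w - c) / w := fun c => by field_simp
    simp only [Pi.div_apply, e]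
    field_simp
  · have h := ((hc b).inv₀ one_ne_zero).const_mul (b - a)
    rw [inv_one, mul_one] at h
    refine h.congr' ?_
    filter_upwards [h0 0, h0 b] with w hw hb
    have hb' := sub_ne_zero.mpr hb
    have e : ∀ c : ℂ, 1 - c * w⁻¹ = (w - c) / w := fun c => by field_simp
    simp only [e]
    field_simp
    ring

lemma bl_prod {ι : Type*} (s : Finset ι) (a b : ι → ℂ) :
    Tendsto (fun w : ℂ => ∏ k ∈ s, (w - a k) / (w - b k)) (cobounded ℂ) (nhds 1) ∧
    Tendsto (fun w : ℂ => w * (∏ k ∈ s, (w - a k) / (w - b k) - 1)) (cobounded ℂ)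
      (nhds (∑ k ∈ s, (b k - a k))) := by
  classical
  induction s using Finset.induction_on with
  | empty => simp
  | insert i s hi ih =>
    obtain ⟨h1, h2⟩ := bl_factor (a i) (b i)
    simp only [Finset.prod_insert hi, Finset.sum_insert hi]
    constructor
    · simpa using h1.mul ih.1
    · have h := (h2.mul ih.1).add ih.2
      rw [mul_one] at h
      refine h.congr fun w => ?_
      ring

/-- For points `z₁,…,z_n` in the upper half-plane, the Blaschke product
`T(z) = ∏ (z - z_k)/(z - conj z_k)` tends to `1` as `|z| → ∞`, and more precisely
`z(T(z) - 1) → -2i ∑ Im z_k`. -/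
theorem blaschke_product_asymptotics (n : ℕ) (z : Fin n → ℂ)
    (hz : ∀ k, 0 < (z k).im) :
    let T : ℂ → ℂ := fun w => ∏ k, (w - z k) / (w - (starRingEnd ℂ) (z k))
    Tendsto T (cobounded ℂ) (nhds 1) ∧
    Tendsto (fun w => w * (T w - 1)) (cobounded ℂ)
      (nhds (-2 * Complex.I * ∑ k, ((z k).im : ℂ))) := by
  intro T
  have h := bl_prod Finset.univ z (fun k => (starRingEnd ℂ) (z k))
  refine ⟨h.1, ?_⟩
  have e : -2 * Complex.I * ∑ k, ((z k).im : ℂ) = ∑ k, ((starRingEnd ℂ) (z k) - z k) := by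
    rw [Finset.mul_sum]
    refine Finset.sum_congr rfl fun k _ => ?_
    apply Complex.ext
    · simp
    · simp
      ring
  rw [e]
  exact h.2
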